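/- Define G₀ := k₊²·exp(2μ₊/k₊) + k₋²·exp(−2μ₋/k₋) on ℝ³. Then the function W := W̃·G₀ satisfies W₁₁ + (1/2)·((1+p)·W)₊₊ + (1/2)·((1−p)·W)₋₋ = 0 at every point of ℝ³. (This is the anomalous global solution G₀ appearing in Proposition 6.4(2) of the paper.) -/

import Mathlib

/-- Partial derivative in the `i`-th coordinate direction of a function on `ℝ³`
(coordinates `μ₁ = x 0`, `μ₊ = x 1`, `μ₋ = x 2`). -/
noncomputable def pd3 (i : Fin 3) (F : (Fin 3 → ℝ) → ℝ) (x : Fin 3 → ℝ) : ℝ :=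
  deriv (fun t => F (Function.update x i t)) (x i)

/-- A function independent of coordinate `i` has vanishing second derivative in it. -/
theorem pd3_pd3_zero (i : Fin 3) (F : (Fin 3 → ℝ) → ℝ)
    (h : ∀ x t, F (Function.update x i t) = F x) (x : Fin 3 → ℝ) :
    pd3 i (pd3 i F) x = 0 := by
  have h1 : ∀ y, pd3 i F y = 0 := by
    intro y
    simp [pd3, h]
  have h2 : pd3 i F = fun _ => 0 := funext h1
  rw [h2]
  simp [pd3]

/-- (Proposition 6.4(2).) With `a₊ = 2/k₊`, `a₋ = 2/k₋` and
`G₀ := k₊² exp(2μ₊/k₊) + k₋² exp(-2μ₋/k₋)`, the anomalous solution `W := W̃·G₀`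
satisfies `W₁₁ + (1/2)((1+p)W)₊₊ + (1/2)((1-p)W)₋₋ = 0` at every point of `ℝ³`. -/
theorem anomalous_solution (kp km : ℝ) (hkp : kp ≠ 0) (hkm : km ≠ 0)
    (ap am : ℝ) (hap : ap = 2 / kp) (ham : am = 2 / km)
    (Φ p Wt G0 W : (Fin 3 → ℝ) → ℝ)
    (hΦ : ∀ x, Φ x = ap * x 1 + am * x 2)
    (hp : ∀ x, p x = (1 - Real.exp (Φ x)) / (1 + Real.exp (Φ x)))
    (hWt : ∀ x, Wt x = (ap ^ 2 * (1 + p x) + am ^ 2 * (1 - p x))⁻¹)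
    (hG0 : ∀ x, G0 x = kp ^ 2 * Real.exp (2 * x 1 / kp) + km ^ 2 * Real.exp (-(2 * x 2 / km)))
    (hW : ∀ x, W x = Wt x * G0 x) :
    ∀ x : Fin 3 → ℝ,
      pd3 0 (pd3 0 W) x
        + (1 / 2) * pd3 1 (pd3 1 (fun y => (1 + p y) * W y)) x
        + (1 / 2) * pd3 2 (pd3 2 (fun y => (1 - p y) * W y)) x = 0 := by
  intro x
  have hap0 : ap ≠ 0 := by rw [hap]; positivity
  have ham0 : am ≠ 0 := by rw [ham]; positivity
  have hkp' : kp = 2 / ap := by rw [hap]; field_simp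
  have hkm' : km = 2 / am := by rw [ham]; field_simp
  have hE : ∀ y, Real.exp (Φ y) = Real.exp (ap * y 1) * Real.exp (am * y 2) := by
    intro y
    rw [hΦ, Real.exp_add]
  have hG : ∀ y, G0 y = (2 / ap) ^ 2 * Real.exp (ap * y 1)
      + (2 / am) ^ 2 * (Real.exp (am * y 2))⁻¹ := by
    intro y
    rw [hG0, ← Real.exp_neg, ← hkp', ← hkm', hap, ham]
    congr 4 <;> ring
  have hP : ∀ y, (1 + p y) * W y = 4 / (ap ^ 2 * am ^ 2 * Real.exp (am * y 2)) := by
    intro y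
    rw [hW, hWt, hp, hG, hE]
    have hu := Real.exp_pos (ap * y 1)
    have hv := Real.exp_pos (am * y 2)
    generalize Real.exp (ap * y 1) = u at *
    generalize Real.exp (am * y 2) = v at *
    have e1 : 1 + (1 - u * v) / (1 + u * v) = 2 / (1 + u * v) := by field_simp; ring
    have e2 : 1 - (1 - u * v) / (1 + u * v) = 2 * (u * v) / (1 + u * v) := by
      field_simp; ring
    have e3 : ap ^ 2 * (2 / (1 + u * v)) + am ^ 2 * (2 * (u * v) / (1 + u * v))
        = 2 * (ap ^ 2 + am ^ 2 * (u * v)) / (1 + u * v) := by field_simp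
    have h3 : ap ^ 2 + am ^ 2 * (u * v) ≠ 0 := by positivity
    rw [e1, e2, e3]
    field_simp
    ring
  have hM : ∀ y, (1 - p y) * W y = 4 * Real.exp (ap * y 1) / (ap ^ 2 * am ^ 2) := by
    intro y
    have h1 : 1 - p y = Real.exp (Φ y) * (1 + p y) := by
      rw [hp]
      have := Real.exp_pos (Φ y)
      field_simp
      ring
    rw [h1, mul_assoc, hP, hE]
    field_simp
  rw [pd3_pd3_zero 0, pd3_pd3_zero 1, pd3_pd3_zero 2]
  · ring
  · intro y t
    simp only [hM]
    simp
  · intro y t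
    simp only [hP]
    simp
  · intro y t
    simp only [hW, hWt, hp, hG, hE]
    simp
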